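/- Let Γ be a finite connected simple graph and Γ₁ a standard subgraph of Γ. Then: (i) there exists a maximally standard subgraph of Γ containing Γ₁; (ii) if Γ₂ is a standard subgraph vertex-disjoint from Γ₁, then Γ₁ ⊆ Γ₂^⊥, the connected component M of Γ₂^⊥ containing Γ₁ is maximally standard, and every maximally standard subgraph of Γ that contains Γ₁ and is vertex-disjoint from Γ₂ is a subgraph of M; (iii) under the same hypotheses, the subgraph N := K^⊥, where K is the connected component of Γ₁^⊥ containing Γ₂, is maximally standard, contains Γ₁, is vertex-disjoint from Γ₂, and is a subgraph of every maximally standard subgraph of Γ that contains Γ₁ and is vertex-disjoint from Γ₂. -/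

import Mathlib

/-!
Call a subgraph a core if all its degrees are at least two. Pruning computes the largest core
inside a subgraph, so `orth B` is the largest core vertex-disjoint from `B`; on cores, `orth` is
thus an antitone Galois connection with itself. A standard subgraph is a core, since connectedness
and the presence of an edge exclude isolated vertices.

The geometric input is `join_dichotomy`: in a connected graph, given pairwise disjoint connected
cores `L`, `A`, `B`, a walk from `L` up to its first visit to `A ∪ B` yields a connected core that
contains `L` and one of `A`, `B` and avoids the other, because adding a path between two cores
gives a core. Applied to `L` a hypothetical extra component of `orth M`, and then of
`orth (orth M)`, it shows that for a component `M` of `orth B` both of these are connected; then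
`orth (orth M) = M` by maximality of the component, and `M` is maximally standard
(`isMaxStandard_component`).

The maximality claim holds because a connected core disjoint from `Γ₂` lies in `orth Γ₂`, hence in
the component it meets. The minimality claim follows by applying `orth`: if `M'` is maximally
standard, contains `Γ₁` and avoids `Γ₂`, then `orth M'` lies in the component `K` of `orth Γ₁`
containing `Γ₂`, whence `orth K ≤ orth (orth M') = M'`.
-/

open scoped Classical

noncomputable section

namespace GraphBraid

/-- A cycle subgraph: a subgraph with at least one edge which is connected and all of whose
vertices have degree exactly two (inside the subgraph). -/
def IsCycleSubgraph {W : Type*} {G : SimpleGraph W} (H : G.Subgraph) : Prop :=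
  H.edgeSet.Nonempty ∧ H.Connected ∧ ∀ v ∈ H.verts, (H.neighborSet v).ncard = 2

/-- A subgraph is leafless when no vertex has degree one inside the subgraph. -/
def IsLeafless {W : Type*} {G : SimpleGraph W} (H : G.Subgraph) : Prop :=
  ∀ v ∈ H.verts, (H.neighborSet v).ncard ≠ 1

variable {V : Type} [Fintype V] [DecidableEq V]

/-- One pruning step: delete all vertices of degree at most one. -/
def pruneStep {Γ : SimpleGraph V} (H : Γ.Subgraph) : Γ.Subgraph :=
  H.deleteVerts {v | (H.neighborSet v).ncard ≤ 1}

/-- Iterated pruning: delete vertices of degree at most one until none remain (iterating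
`card V` times guarantees stabilization on a finite graph). -/
def prune {Γ : SimpleGraph V} (H : Γ.Subgraph) : Γ.Subgraph :=
  pruneStep^[Fintype.card V] H

/-- The orthogonal complement of a subgraph: prune the induced subgraph on the complement
of its vertex set. -/
def orth {Γ : SimpleGraph V} (H : Γ.Subgraph) : Γ.Subgraph :=
  prune ((⊤ : Γ.Subgraph).deleteVerts H.verts)

/-- A standard subgraph: connected, with at least one edge, leafless, and with nontrivial
orthogonal complement. -/
def IsStandard {Γ : SimpleGraph V} (H : Γ.Subgraph) : Prop :=
  H.Connected ∧ H.edgeSet.Nonempty ∧ IsLeafless H ∧ (orth H).edgeSet.Nonempty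

/-- A maximally standard subgraph: standard, with standard orthogonal complement, and equal
to its double orthogonal complement. -/
def IsMaxStandard {Γ : SimpleGraph V} (H : Γ.Subgraph) : Prop :=
  IsStandard H ∧ IsStandard (orth H) ∧ orth (orth H) = H

/-- `K` is a connected component of `H`: a maximal connected subgraph of `H`. -/
def IsComponentOf {Γ : SimpleGraph V} (K H : Γ.Subgraph) : Prop :=
  K ≤ H ∧ K.Connected ∧ ∀ K' : Γ.Subgraph, K ≤ K' → K' ≤ H → K'.Connected → K' = K

/-- Two vertex-disjoint subgraphs are separable if they are contained in a pair of
vertex-disjoint leafless subgraphs. -/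
def Separable {Γ : SimpleGraph V} (Λ₁ Λ₂ : Γ.Subgraph) : Prop :=
  ∃ G₁ G₂ : Γ.Subgraph, IsLeafless G₁ ∧ IsLeafless G₂ ∧ Disjoint G₁.verts G₂.verts ∧
    Λ₁ ≤ G₁ ∧ Λ₂ ≤ G₂

/-- The curve graph `C(Γ)`: vertices are the cycle subgraphs which are standard, adjacent
when distinct and vertex-disjoint. -/
def curveGraph (Γ : SimpleGraph V) :
    SimpleGraph {H : Γ.Subgraph // IsCycleSubgraph H ∧ IsStandard H} :=
  SimpleGraph.fromRel fun H K => Disjoint H.1.verts K.1.verts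

/-- The graph `S(Γ)` of standard subgraphs: `Γ₁`, `Γ₂` are adjacent when they are distinct
and `Γ₁ ⊆ Γ₂ ∪ Γ₂^⊥` or `Γ₂ ⊆ Γ₁ ∪ Γ₁^⊥`. -/
def standardGraph (Γ : SimpleGraph V) :
    SimpleGraph {H : Γ.Subgraph // IsStandard H} :=
  SimpleGraph.fromRel fun H K => H.1 ≤ K.1 ⊔ orth K.1 ∨ K.1 ≤ H.1 ⊔ orth H.1

/-- The graph `M(Γ)`: the subgraph of `S(Γ)` induced on the maximally standard
subgraphs. -/
def maxStandardGraph (Γ : SimpleGraph V) :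
    SimpleGraph {H : {H : Γ.Subgraph // IsStandard H} // IsMaxStandard H.1} :=
  (standardGraph Γ).induce {H : {H : Γ.Subgraph // IsStandard H} | IsMaxStandard H.1}

set_option linter.unusedSectionVars false

/-! ### Cores and pruning -/

/-- A core is a subgraph in which every vertex has degree at least two. Unlike `IsLeafless`, this
excludes isolated vertices as well; the empty subgraph is a core. -/
def IsCore {Γ : SimpleGraph V} (H : Γ.Subgraph) : Prop :=
  ∀ v ∈ H.verts, 1 < (H.neighborSet v).ncard

lemma isCore_of_isLeafless {Γ : SimpleGraph V} {H : Γ.Subgraph} (hc : H.Connected)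
    (he : H.edgeSet.Nonempty) (hl : IsLeafless H) : IsCore H := by
  intro v hv
  obtain ⟨e, he⟩ := he
  induction e with
  | h a b =>
    have hab : H.Adj a b := he
    have : Nontrivial H.verts :=
      ⟨⟨⟨a, hab.fst_mem⟩, ⟨b, hab.snd_mem⟩, fun h => hab.ne (congrArg Subtype.val h)⟩⟩
    obtain ⟨u, hu⟩ := hc.preconnected.exists_adj_of_nontrivial ⟨v, hv⟩
    have h0 : 0 < (H.neighborSet v).ncard := (Set.ncard_pos).2 ⟨u, hu⟩
    have := hl v hv
    omega

lemma IsStandard.isCore {Γ : SimpleGraph V} {H : Γ.Subgraph} (h : IsStandard H) : IsCore H :=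
  isCore_of_isLeafless h.1 h.2.1 h.2.2.1

lemma IsCore.isLeafless {Γ : SimpleGraph V} {H : Γ.Subgraph} (h : IsCore H) : IsLeafless H :=
  fun v hv => (h v hv).ne'

lemma IsCore.edgeSet_nonempty {Γ : SimpleGraph V} {H : Γ.Subgraph} (h : IsCore H)
    (hne : H.verts.Nonempty) : H.edgeSet.Nonempty := by
  obtain ⟨v, hv⟩ := hne
  have h0 : 0 < (H.neighborSet v).ncard := by have := h v hv; omega
  obtain ⟨u, hu⟩ := (Set.ncard_pos).1 h0
  exact ⟨s(v, u), hu⟩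

lemma degree_mono {Γ : SimpleGraph V} {A B : Γ.Subgraph} (h : A ≤ B) (v : V) :
    (A.neighborSet v).ncard ≤ (B.neighborSet v).ncard :=
  Set.ncard_le_ncard fun _ hx => h.2 hx

lemma IsCore.sup {Γ : SimpleGraph V} {A B : Γ.Subgraph} (hA : IsCore A) (hB : IsCore B) :
    IsCore (A ⊔ B) := by
  rintro v (hv | hv)
  · exact (hA v hv).trans_le (degree_mono le_sup_left v)
  · exact (hB v hv).trans_le (degree_mono le_sup_right v)

lemma IsCore.le_pruneStep {Γ : SimpleGraph V} {A H : Γ.Subgraph} (hA : IsCore A) (h : A ≤ H) :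
    A ≤ pruneStep H := by
  have key : ∀ v ∈ A.verts, ¬ (H.neighborSet v).ncard ≤ 1 := fun v hv hle => by
    have h1 := hA v hv
    have h2 := degree_mono h v
    omega
  refine ⟨fun v hv => ⟨h.1 hv, key v hv⟩, fun v w hvw => ?_⟩
  exact SimpleGraph.Subgraph.deleteVerts_adj.2
    ⟨h.1 hvw.fst_mem, key v hvw.fst_mem, h.1 hvw.snd_mem, key w hvw.snd_mem, h.2 hvw⟩

lemma IsCore.le_prune {Γ : SimpleGraph V} {A H : Γ.Subgraph} (hA : IsCore A) (h : A ≤ H) :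
    A ≤ prune H := by
  unfold prune
  generalize Fintype.card V = n
  induction n with
  | zero => exact h
  | succ n ih =>
    rw [Function.iterate_succ_apply']
    exact hA.le_pruneStep ih

lemma pruneStep_le {Γ : SimpleGraph V} (H : Γ.Subgraph) : pruneStep H ≤ H :=
  SimpleGraph.Subgraph.deleteVerts_le

lemma IsCore.pruneStep_eq {Γ : SimpleGraph V} {H : Γ.Subgraph} (h : IsCore H) :
    pruneStep H = H :=
  le_antisymm (pruneStep_le H) (h.le_pruneStep le_rfl)

lemma prune_le {Γ : SimpleGraph V} (H : Γ.Subgraph) : prune H ≤ H := by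
  unfold prune
  generalize Fintype.card V = n
  induction n with
  | zero => exact le_rfl
  | succ n ih =>
    rw [Function.iterate_succ_apply']
    exact (pruneStep_le _).trans ih

/-- Each pruning step that does not start from a core removes a vertex, so `card V` steps suffice
to reach a core. -/
lemma isCore_prune {Γ : SimpleGraph V} (H : Γ.Subgraph) : IsCore (prune H) := by
  have key : ∀ n : ℕ, IsCore (pruneStep^[n] H) ∨
      (pruneStep^[n] H).verts.ncard + n ≤ Fintype.card V := by
    intro n
    induction n with
    | zero =>
      right
      simpa [Nat.card_eq_fintype_card] using Set.ncard_le_card H.verts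
    | succ n ih =>
      rw [Function.iterate_succ_apply']
      by_cases hc : IsCore (pruneStep^[n] H)
      · left
        rwa [hc.pruneStep_eq]
      · right
        have hle := ih.resolve_left hc
        unfold IsCore at hc
        push Not at hc
        obtain ⟨v, hv, hdeg⟩ := hc
        have : (pruneStep (pruneStep^[n] H)).verts.ncard < (pruneStep^[n] H).verts.ncard := by
          refine Set.ncard_lt_ncard ⟨(pruneStep_le _).1, fun hsub => ?_⟩
          exact (hsub hv).2 hdeg
        omega
  rcases key (Fintype.card V) with h | h
  · exact h
  · have h0 : (prune H).verts.ncard = 0 := by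
      unfold prune
      omega
    rw [Set.ncard_eq_zero] at h0
    intro v hv
    rw [h0] at hv
    exact hv.elim

lemma isCore_orth {Γ : SimpleGraph V} (H : Γ.Subgraph) : IsCore (orth H) := isCore_prune _

lemma disjoint_orth {Γ : SimpleGraph V} (H : Γ.Subgraph) : Disjoint (orth H).verts H.verts :=
  Set.disjoint_left.2 fun _ hv => ((prune_le _).1 hv).2

/-- Together with `isCore_orth` and `disjoint_orth`: `orth B` is the largest core
vertex-disjoint from `B`. -/
lemma IsCore.le_orth {Γ : SimpleGraph V} {A B : Γ.Subgraph} (hA : IsCore A)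
    (hd : Disjoint A.verts B.verts) : A ≤ orth B := by
  refine hA.le_prune ⟨fun v hv => ⟨trivial, Set.disjoint_left.1 hd hv⟩, fun v w hvw => ?_⟩
  exact SimpleGraph.Subgraph.deleteVerts_adj.2
    ⟨trivial, Set.disjoint_left.1 hd hvw.fst_mem, trivial, Set.disjoint_left.1 hd hvw.snd_mem,
      hvw.adj_sub⟩

/-- A sufficient criterion for standardness: the core `B` witnesses that the orthogonal
complement is nontrivial. -/
lemma isStandard_of_disjoint {Γ : SimpleGraph V} {A B : Γ.Subgraph} (hA : IsCore A)
    (hAc : A.Connected) (hB : IsCore B) (hBne : B.verts.Nonempty)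
    (hd : Disjoint A.verts B.verts) : IsStandard A :=
  ⟨hAc, hA.edgeSet_nonempty hAc.nonempty, hA.isLeafless,
    (isCore_orth A).edgeSet_nonempty (hBne.mono (hB.le_orth hd.symm).1)⟩

/-! ### Connected components of subgraphs -/

lemma connected_sup_of_mem {Γ : SimpleGraph V} {A B : Γ.Subgraph} (hA : A.Connected)
    (hB : B.Connected) {v : V} (ha : v ∈ A.verts) (hb : v ∈ B.verts) : (A ⊔ B).Connected :=
  SimpleGraph.Subgraph.connected_sup hA.preconnected hB.preconnected ⟨v, ha, hb⟩

lemma exists_component {Γ : SimpleGraph V} {A H : Γ.Subgraph} (hA : A.Connected) (h : A ≤ H) :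
    ∃ K, IsComponentOf K H ∧ A ≤ K := by
  obtain ⟨K, hAK, hK⟩ := Finite.exists_le_maximal
    (p := fun K : Γ.Subgraph => K ≤ H ∧ K.Connected) ⟨h, hA⟩
  exact ⟨K, ⟨hK.1.1, hK.1.2, fun K' h1 h2 h3 => le_antisymm (hK.2 ⟨h2, h3⟩ h1) h1⟩, hAK⟩

/-- A component absorbs every connected subgraph it meets. -/
lemma IsComponentOf.le_of_mem {Γ : SimpleGraph V} {K H A : Γ.Subgraph} (hK : IsComponentOf K H)
    (hA : A.Connected) (hAH : A ≤ H) {v : V} (hv : v ∈ A.verts) (hvK : v ∈ K.verts) : A ≤ K := by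
  have := hK.2.2 (K ⊔ A) le_sup_left (sup_le hK.1 hAH) (connected_sup_of_mem hK.2.1 hA hvK hv)
  rw [← this]
  exact le_sup_right

lemma IsComponentOf.adj {Γ : SimpleGraph V} {K H : Γ.Subgraph} (hK : IsComponentOf K H)
    {v w : V} (hv : v ∈ K.verts) (h : H.Adj v w) : K.Adj v w := by
  have hle : Γ.subgraphOfAdj h.adj_sub ≤ H := SimpleGraph.subgraphOfAdj_le_of_adj H h
  have := hK.le_of_mem (SimpleGraph.Subgraph.subgraphOfAdj_connected h.adj_sub) hle
    (v := v) (by simp) hv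
  exact this.2 (by simp)

lemma IsComponentOf.isCore {Γ : SimpleGraph V} {K H : Γ.Subgraph} (hK : IsComponentOf K H)
    (hH : IsCore H) : IsCore K := fun v hv =>
  (hH v (hK.1.1 hv)).trans_le (Set.ncard_le_ncard fun _ hx => hK.adj hv hx)

/-- A component met by every other component is the whole subgraph. -/
lemma IsComponentOf.eq_of_forall {Γ : SimpleGraph V} {K H : Γ.Subgraph} (hK : IsComponentOf K H)
    (h : ∀ L, IsComponentOf L H → ¬ Disjoint L.verts K.verts) : H = K := by
  have hv : ∀ v ∈ H.verts, v ∈ K.verts := by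
    intro v hv
    have hle : Γ.singletonSubgraph v ≤ H := (SimpleGraph.singletonSubgraph_le_iff v H).2 hv
    obtain ⟨L, hL, hvL⟩ := exists_component SimpleGraph.Subgraph.singletonSubgraph_connected hle
    obtain ⟨x, hxL, hxK⟩ := Set.not_disjoint_iff.1 (h L hL)
    exact (hK.le_of_mem hL.2.1 hL.1 hxL hxK).1 (hvL.1 (by simp))
  have hHK : H ≤ K := ⟨hv, fun v w hvw => hK.adj (hv v hvw.fst_mem) hvw⟩
  exact le_antisymm hHK hK.1

/-! ### Joining cores by paths -/

/-- A walk ending in `T` can be cut off at its first visit to `T`. -/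
lemma exists_walk_first_hit {Γ : SimpleGraph V} (T : Set V) {u v : V} (p : Γ.Walk u v)
    (hv : v ∈ T) : ∃ t ∈ T, ∃ q : Γ.Walk u t, ∀ x ∈ q.support, x ∈ T → x = t := by
  induction p with
  | nil => exact ⟨_, hv, .nil, by simp⟩
  | @cons a b c hab p ih =>
    by_cases ha : a ∈ T
    · exact ⟨a, ha, .nil, by simp⟩
    · obtain ⟨t, ht, q, hq⟩ := ih hv
      refine ⟨t, ht, .cons hab q, fun x hx hxT => ?_⟩
      rw [SimpleGraph.Walk.support_cons, List.mem_cons] at hx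
      rcases hx with rfl | hx
      · exact (ha hxT).elim
      · exact hq x hx hxT

/-- Two connected cores joined by a walk lie in a common connected core, obtained by adding the
vertices and edges of a path extracted from the walk: interior vertices of a path have degree
two in it. -/
lemma exists_join {Γ : SimpleGraph V} {L K : Γ.Subgraph} (hL : IsCore L) (hLc : L.Connected)
    (hK : IsCore K) (hKc : K.Connected) {u v : V} (hu : u ∈ L.verts) (hv : v ∈ K.verts)
    (q : Γ.Walk u v) :
    ∃ C : Γ.Subgraph, IsCore C ∧ C.Connected ∧ L ≤ C ∧ K ≤ C ∧
      ∀ x ∈ C.verts, x ∈ L.verts ∨ x ∈ K.verts ∨ x ∈ q.support := by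
  set p := q.bypass with hp
  have hpath : p.IsPath := q.bypass_isPath
  have hpc : p.toSubgraph.Connected := p.toSubgraph_connected
  refine ⟨L ⊔ p.toSubgraph ⊔ K, ?_, ?_, le_sup_left.trans le_sup_left, le_sup_right, ?_⟩
  · have hend : ∀ x, x ∈ L.verts ∨ x ∈ K.verts →
        1 < ((L ⊔ p.toSubgraph ⊔ K).neighborSet x).ncard := by
      rintro x (hx | hx)
      · exact (hL x hx).trans_le (degree_mono (le_sup_left.trans le_sup_left) x)
      · exact (hK x hx).trans_le (degree_mono le_sup_right x)
    rintro x ((hx | hx) | hx)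
    · exact hend x (.inl hx)
    · rw [SimpleGraph.Walk.mem_verts_toSubgraph,
        SimpleGraph.Walk.mem_support_iff_exists_getVert] at hx
      obtain ⟨i, rfl, hi⟩ := hx
      by_cases h0 : i = 0
      · subst h0
        exact hend _ (.inl (by simpa using hu))
      by_cases h1 : i = p.length
      · subst h1
        exact hend _ (.inr (by simpa using hv))
      have := hpath.ncard_neighborSet_toSubgraph_internal_eq_two h0 (by omega)
      calc 1 < (p.toSubgraph.neighborSet (p.getVert i)).ncard := by omega
        _ ≤ _ := degree_mono (le_sup_right.trans le_sup_left) _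
    · exact hend x (.inr hx)
  · exact connected_sup_of_mem (connected_sup_of_mem hLc hpc hu p.start_mem_verts_toSubgraph) hKc
      (.inr p.end_mem_verts_toSubgraph) hv
  · rintro x ((hx | hx) | hx)
    · exact .inl hx
    · rw [SimpleGraph.Walk.mem_verts_toSubgraph] at hx
      exact .inr (.inr (q.support_bypass_subset_support hx))
    · exact .inr (.inl hx)

/-- Of three pairwise disjoint connected cores in a connected graph, the first can be joined to
one of the other two within a connected core avoiding the remaining one: follow a walk from `L`
up to its first visit to `A ∪ B`. -/
lemma join_dichotomy {Γ : SimpleGraph V} (hconn : Γ.Connected) {L A B : Γ.Subgraph}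
    (hL : IsCore L) (hLc : L.Connected) (hA : IsCore A) (hAc : A.Connected)
    (hB : IsCore B) (hBc : B.Connected) (hLA : Disjoint L.verts A.verts)
    (hLB : Disjoint L.verts B.verts) (hAB : Disjoint A.verts B.verts) :
    (∃ C : Γ.Subgraph, IsCore C ∧ C.Connected ∧ L ≤ C ∧ A ≤ C ∧ Disjoint C.verts B.verts) ∨
    (∃ C : Γ.Subgraph, IsCore C ∧ C.Connected ∧ L ≤ C ∧ B ≤ C ∧ Disjoint C.verts A.verts) := by
  obtain ⟨l, hl⟩ := hLc.nonempty
  obtain ⟨a, ha⟩ := hAc.nonempty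
  obtain ⟨p⟩ := hconn.preconnected l a
  obtain ⟨t, ht, q, hq⟩ := exists_walk_first_hit (A.verts ∪ B.verts) p (.inl ha)
  rw [Set.disjoint_left] at hLA hLB hAB
  rcases ht with ht | ht
  · left
    obtain ⟨C, h1, h2, h3, h4, h5⟩ := exists_join hL hLc hA hAc hl ht q
    refine ⟨C, h1, h2, h3, h4, Set.disjoint_left.2 fun x hx hxB => ?_⟩
    rcases h5 x hx with h | h | h
    · exact hLB h hxB
    · exact hAB h hxB
    · exact hAB ht (hq x h (.inr hxB) ▸ hxB)
  · right
    obtain ⟨C, h1, h2, h3, h4, h5⟩ := exists_join hL hLc hB hBc hl ht q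
    refine ⟨C, h1, h2, h3, h4, Set.disjoint_left.2 fun x hx hxA => ?_⟩
    rcases h5 x hx with h | h | h
    · exact hLA h hxA
    · exact hAB hxA h
    · exact hAB (hq x h (.inl hxA) ▸ hxA) ht

/-! ### Components of orthogonal complements are maximally standard -/

/-- If `M` is a component of `orth B`, a second component of `orth M` could be joined either to
`M` avoiding `B` or to `B` avoiding `M`; both are impossible. -/
lemma orth_component_connected {Γ : SimpleGraph V} (hconn : Γ.Connected) {M B : Γ.Subgraph}
    (hB : IsCore B) (hBc : B.Connected) (hM : IsComponentOf M (orth B)) :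
    (orth M).Connected := by
  have hMcore := hM.isCore (isCore_orth B)
  have hMB : Disjoint M.verts B.verts := (disjoint_orth B).mono_left hM.1.1
  obtain ⟨K, hK, hBK⟩ := exists_component hBc (hB.le_orth hMB.symm)
  suffices orth M = K by
    rw [this]
    exact hK.2.1
  refine hK.eq_of_forall fun L hL hLK => ?_
  have hLcore := hL.isCore (isCore_orth M)
  have hLM : Disjoint L.verts M.verts := (disjoint_orth M).mono_left hL.1.1
  have hLB : Disjoint L.verts B.verts := hLK.mono_right hBK.1
  obtain ⟨l, hl⟩ := hL.2.1.nonempty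
  rcases join_dichotomy hconn hLcore hL.2.1 hMcore hM.2.1 hB hBc hLM hLB hMB with
    ⟨C, hC, hCc, hLC, hMC, hCB⟩ | ⟨C, hC, hCc, hLC, hBC, hCM⟩
  · have := hM.2.2 C hMC (hC.le_orth hCB) hCc
    exact Set.disjoint_left.1 hLM hl (this ▸ hLC.1 hl)
  · obtain ⟨b, hb⟩ := hBc.nonempty
    have := hK.le_of_mem hCc (hC.le_orth hCM) (hBC.1 hb) (hBK.1 hb)
    exact Set.disjoint_left.1 hLK hl (this.1 (hLC.1 hl))

/-- When `M` is a connected core with connected complement `orth M`, a component of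
`orth (orth M)` missing `M` could be joined to `M` avoiding `orth M`, or to `orth M` avoiding
`M`; both are impossible. -/
lemma orth_orth_connected {Γ : SimpleGraph V} (hconn : Γ.Connected) {M : Γ.Subgraph}
    (hM : IsCore M) (hMc : M.Connected) (hoc : (orth M).Connected) :
    (orth (orth M)).Connected := by
  have hd := disjoint_orth M
  obtain ⟨K, hK, hMK⟩ := exists_component hMc (hM.le_orth hd.symm)
  suffices orth (orth M) = K by
    rw [this]
    exact hK.2.1
  refine hK.eq_of_forall fun L hL hLK => ?_
  have hLcore := hL.isCore (isCore_orth (orth M))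
  have hLO : Disjoint L.verts (orth M).verts := (disjoint_orth (orth M)).mono_left hL.1.1
  have hLM : Disjoint L.verts M.verts := hLK.mono_right hMK.1
  obtain ⟨l, hl⟩ := hL.2.1.nonempty
  rcases join_dichotomy hconn hLcore hL.2.1 hM hMc (isCore_orth M) hoc hLM hLO hd.symm with
    ⟨C, hC, hCc, hLC, hMC, hCO⟩ | ⟨C, hC, hCc, hLC, hOC, hCM⟩
  · obtain ⟨m, hm⟩ := hMc.nonempty
    have := hK.le_of_mem hCc (hC.le_orth hCO) (hMC.1 hm) (hMK.1 hm)
    exact Set.disjoint_left.1 hLK hl (this.1 (hLC.1 hl))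
  · exact Set.disjoint_left.1 hLO hl ((hC.le_orth hCM).1 (hLC.1 hl))

lemma isMaxStandard_component {Γ : SimpleGraph V} (hconn : Γ.Connected) {M B : Γ.Subgraph}
    (hB : IsCore B) (hBc : B.Connected) (hM : IsComponentOf M (orth B)) : IsMaxStandard M := by
  have hMcore := hM.isCore (isCore_orth B)
  have hMB : Disjoint M.verts B.verts := (disjoint_orth B).mono_left hM.1.1
  have hoc := orth_component_connected hconn hB hBc hM
  have hooc := orth_orth_connected hconn hMcore hM.2.1 hoc
  refine ⟨isStandard_of_disjoint hMcore hM.2.1 hB hBc.nonempty hMB,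
    isStandard_of_disjoint (isCore_orth M) hoc hMcore hM.2.1.nonempty (disjoint_orth M), ?_⟩
  refine hM.2.2 _ (hMcore.le_orth (disjoint_orth M).symm) ?_ hooc
  exact (isCore_orth _).le_orth
    ((disjoint_orth (orth M)).mono_right (hB.le_orth hMB.symm).1)

lemma IsMaxStandard.orth {Γ : SimpleGraph V} {M : Γ.Subgraph} (h : IsMaxStandard M) :
    IsMaxStandard (orth M) :=
  ⟨h.2.1, by rw [h.2.2]; exact h.1, by rw [h.2.2]⟩

/-- The largest maximally standard subgraph containing `A` and avoiding `B`. -/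
lemma exists_maximal_envelope {Γ : SimpleGraph V} (hconn : Γ.Connected) {A B : Γ.Subgraph}
    (hA : IsStandard A) (hB : IsStandard B) (hd : Disjoint A.verts B.verts) :
    ∃ M : Γ.Subgraph, IsComponentOf M (orth B) ∧ A ≤ M ∧ IsMaxStandard M ∧
      ∀ M' : Γ.Subgraph, IsMaxStandard M' → A ≤ M' → Disjoint M'.verts B.verts → M' ≤ M := by
  obtain ⟨M, hM, hAM⟩ := exists_component hA.1 (hA.isCore.le_orth hd)
  refine ⟨M, hM, hAM, isMaxStandard_component hconn hB.isCore hB.1 hM, fun M' hM' hAM' hd' => ?_⟩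
  obtain ⟨a, ha⟩ := hA.1.nonempty
  exact hM.le_of_mem hM'.1.1 (hM'.1.isCore.le_orth hd') (hAM'.1 ha) (hAM.1 ha)

/-- Let `Γ₁` be a standard subgraph of a finite connected simple graph
`Γ`.  Then (i) some maximally standard subgraph contains `Γ₁`; and for any standard `Γ₂`
vertex-disjoint from `Γ₁`: (ii) `Γ₁ ⊆ Γ₂^⊥`, and the component of `Γ₂^⊥` containing `Γ₁`
exists, is maximally standard, and contains every maximally standard subgraph containing
`Γ₁` and vertex-disjoint from `Γ₂`; (iii) the orthogonal complement of the component of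
`Γ₁^⊥` containing `Γ₂` is maximally standard, contains `Γ₁`, is vertex-disjoint from `Γ₂`,
and is contained in every maximally standard subgraph containing `Γ₁` and vertex-disjoint
from `Γ₂`. -/
theorem maximal_and_minimal_maxStandard_envelopes
    (V : Type) [Fintype V] [DecidableEq V] (Γ : SimpleGraph V) (hconn : Γ.Connected)
    (Γ₁ : Γ.Subgraph) (h₁ : IsStandard Γ₁) :
    (∃ M : Γ.Subgraph, IsMaxStandard M ∧ Γ₁ ≤ M) ∧
    (∀ Γ₂ : Γ.Subgraph, IsStandard Γ₂ → Disjoint Γ₁.verts Γ₂.verts →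
      (Γ₁ ≤ orth Γ₂ ∧
        ∃ M : Γ.Subgraph, IsComponentOf M (orth Γ₂) ∧ Γ₁ ≤ M ∧ IsMaxStandard M ∧
          ∀ M' : Γ.Subgraph, IsMaxStandard M' → Γ₁ ≤ M' →
            Disjoint M'.verts Γ₂.verts → M' ≤ M)) ∧
    (∀ Γ₂ : Γ.Subgraph, IsStandard Γ₂ → Disjoint Γ₁.verts Γ₂.verts →
      ∃ K : Γ.Subgraph, IsComponentOf K (orth Γ₁) ∧ Γ₂ ≤ K ∧
        IsMaxStandard (orth K) ∧ Γ₁ ≤ orth K ∧ Disjoint (orth K).verts Γ₂.verts ∧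
        ∀ M' : Γ.Subgraph, IsMaxStandard M' → Γ₁ ≤ M' →
          Disjoint M'.verts Γ₂.verts → orth K ≤ M') := by
  refine ⟨?_, fun Γ₂ h₂ hd => ⟨h₁.isCore.le_orth hd, exists_maximal_envelope hconn h₁ h₂ hd⟩,
    fun Γ₂ h₂ hd => ?_⟩
  · -- Any component of `orth Γ₁` serves as a standard subgraph disjoint from `Γ₁`.
    obtain ⟨e, he⟩ := h₁.2.2.2
    induction e with
    | h a b =>
      have hab : (orth Γ₁).Adj a b := he
      obtain ⟨B, hB, -⟩ := exists_component
        (SimpleGraph.Subgraph.subgraphOfAdj_connected hab.adj_sub)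
        (SimpleGraph.subgraphOfAdj_le_of_adj _ hab)
      have hBd : Disjoint B.verts Γ₁.verts := (disjoint_orth Γ₁).mono_left hB.1.1
      have hBs : IsStandard B := isStandard_of_disjoint (hB.isCore (isCore_orth Γ₁)) hB.2.1
        h₁.isCore h₁.1.nonempty hBd
      obtain ⟨M, -, hle, hM, -⟩ := exists_maximal_envelope hconn h₁ hBs hBd.symm
      exact ⟨M, hM, hle⟩
  · obtain ⟨K, hK, hle, hKm, -⟩ := exists_maximal_envelope hconn h₂ h₁ hd.symm
    have hKd : Disjoint K.verts Γ₁.verts := (disjoint_orth Γ₁).mono_left hK.1.1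
    refine ⟨K, hK, hle, hKm.orth, h₁.isCore.le_orth hKd.symm, (disjoint_orth K).mono_right hle.1,
      fun M' hM' hle' hd' => ?_⟩
    -- `orth M'` is connected, avoids `Γ₁` and contains `Γ₂`, so it lies in `K`; now apply `orth`.
    obtain ⟨x, hx⟩ := h₂.1.nonempty
    have hMK : orth M' ≤ K := hK.le_of_mem hM'.2.1.1
      ((isCore_orth M').le_orth ((disjoint_orth M').mono_right hle'.1))
      ((h₂.isCore.le_orth hd'.symm).1 hx) (hle.1 hx)
    rw [← hM'.2.2]
    exact (isCore_orth K).le_orth ((disjoint_orth K).mono_right hMK.1)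

end GraphBraid
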